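/- For every Ω ∈ 𝔖₂ and every z ∈ ℂ² with θ[00;00](z,Ω) = 0 (i.e. z lies on the theta divisor, whose image is the trope D1), the following four Rosenhain hyperplane equations hold: (H1) A1A3A6·X4 + A2A4A9·X5 + A5A7A8·X6 = 0; (H2) A1A10A3·X3 + A5A8A9·X5 − A2A4A7·X6 = 0; (H5) A1A6A10·X2 + A4A5A7·X5 − A2A8A9·X6 = 0; (H14) A5A6A9·X1 + A1A2A7·X3 − A3A4A10·X6 = 0. -/

import Mathlib

/-!
Each of the four equations is an instance of Riemann's quartic theta relation. The orthogonal matrix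
`T = ½ (1 1 1 1; 1 1 -1 -1; 1 -1 1 -1; 1 -1 -1 1)` sends the arguments `(z, z, z, z)` to
`(2z, 0, 0, 0)`, so a product `θ(z) θ_p(z) θ_q(z) θ_r(z)` becomes a quarter of a sum, over the sixteen
half-integral characteristics `(α, β)`, of terms `θ[..](2z) θ[..](0) θ[..](0) θ[..](0)`
(`riemann_relation`). When the characteristics are taken to be those of some `X` and of the three
theta constants multiplying it in the equation, every term but three contains an odd theta constant,
hence vanishes (`th_odd`), and the three surviving ones form the left-hand side of the equation.
On the other side the product contains the factor `θ(z)`, which is zero on the theta divisor.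

The quartic relation itself is a rearrangement of an absolutely convergent series over quadruples of
lattice vectors. The lattice `T ℤ⁴` consists of the vectors in `ℤ⁴ ∪ (ℤ + ½)⁴` whose integral parts
have an even sum; summing over `α` produces the union and summing over `β` is the projection onto the
even vectors (`sum_char`), while orthogonality of `T` preserves the exponents (`quadTerm_split`).
Absolute convergence follows by comparison with products of one-variable Jacobi theta series.
-/

open Complex

/-- Genus-2 theta function with characteristics. -/
noncomputable def theta2 (a b : Fin 2 → ℝ) (z : Fin 2 → ℂ)
    (Ω : Matrix (Fin 2) (Fin 2) ℂ) : ℂ :=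
  ∑' n : Fin 2 → ℤ,
    Complex.exp ((Real.pi : ℂ) * I *
        (∑ i, ∑ j, ((n i : ℂ) + (a i : ℂ)) * Ω i j * ((n j : ℂ) + (a j : ℂ)))
      + 2 * (Real.pi : ℂ) * I * (∑ i, ((n i : ℂ) + (a i : ℂ)) * (z i + (b i : ℂ))))

/-- The Siegel upper half space of degree 2. -/
def IsSiegel (Ω : Matrix (Fin 2) (Fin 2) ℂ) : Prop :=
  Ω.IsSymm ∧ (Matrix.of fun i j => (Ω i j).im).PosDef

noncomputable def A₁ (Ω : Matrix (Fin 2) (Fin 2) ℂ) : ℂ := theta2 ![0, 0] ![0, 0] 0 Ω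
noncomputable def A₂ (Ω : Matrix (Fin 2) (Fin 2) ℂ) : ℂ := theta2 ![0, 0] ![0, 1/2] 0 Ω
noncomputable def A₃ (Ω : Matrix (Fin 2) (Fin 2) ℂ) : ℂ := theta2 ![0, 0] ![1/2, 0] 0 Ω
noncomputable def A₄ (Ω : Matrix (Fin 2) (Fin 2) ℂ) : ℂ := theta2 ![0, 0] ![1/2, 1/2] 0 Ω
noncomputable def A₅ (Ω : Matrix (Fin 2) (Fin 2) ℂ) : ℂ := theta2 ![0, 1/2] ![0, 0] 0 Ω
noncomputable def A₆ (Ω : Matrix (Fin 2) (Fin 2) ℂ) : ℂ := theta2 ![1/2, 0] ![0, 0] 0 Ω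
noncomputable def A₇ (Ω : Matrix (Fin 2) (Fin 2) ℂ) : ℂ := theta2 ![1/2, 1/2] ![0, 0] 0 Ω
noncomputable def A₈ (Ω : Matrix (Fin 2) (Fin 2) ℂ) : ℂ := theta2 ![0, 1/2] ![1/2, 0] 0 Ω
noncomputable def A₉ (Ω : Matrix (Fin 2) (Fin 2) ℂ) : ℂ := theta2 ![1/2, 0] ![0, 1/2] 0 Ω
noncomputable def A₁₀ (Ω : Matrix (Fin 2) (Fin 2) ℂ) : ℂ := theta2 ![1/2, 1/2] ![1/2, 1/2] 0 Ω

noncomputable def X₁ (z : Fin 2 → ℂ) (Ω : Matrix (Fin 2) (Fin 2) ℂ) : ℂ :=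
  theta2 ![0, 1/2] ![0, 1/2] (fun i => 2 * z i) Ω
noncomputable def X₂ (z : Fin 2 → ℂ) (Ω : Matrix (Fin 2) (Fin 2) ℂ) : ℂ :=
  theta2 ![0, 1/2] ![1/2, 1/2] (fun i => 2 * z i) Ω
noncomputable def X₃ (z : Fin 2 → ℂ) (Ω : Matrix (Fin 2) (Fin 2) ℂ) : ℂ :=
  theta2 ![1/2, 1/2] ![0, 1/2] (fun i => 2 * z i) Ω
noncomputable def X₄ (z : Fin 2 → ℂ) (Ω : Matrix (Fin 2) (Fin 2) ℂ) : ℂ :=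
  theta2 ![1/2, 0] ![1/2, 0] (fun i => 2 * z i) Ω
noncomputable def X₅ (z : Fin 2 → ℂ) (Ω : Matrix (Fin 2) (Fin 2) ℂ) : ℂ :=
  theta2 ![1/2, 0] ![1/2, 1/2] (fun i => 2 * z i) Ω
noncomputable def X₆ (z : Fin 2 → ℂ) (Ω : Matrix (Fin 2) (Fin 2) ℂ) : ℂ :=
  theta2 ![1/2, 1/2] ![1/2, 0] (fun i => 2 * z i) Ω

/-! ### Convergence of the theta series -/

/-- The term of index `n` of the theta series. -/
noncomputable def thetaTerm (a b : Fin 2 → ℝ) (z : Fin 2 → ℂ)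
    (Ω : Matrix (Fin 2) (Fin 2) ℂ) (n : Fin 2 → ℤ) : ℂ :=
  Complex.exp ((Real.pi : ℂ) * I *
        (∑ i, ∑ j, ((n i : ℂ) + (a i : ℂ)) * Ω i j * ((n j : ℂ) + (a j : ℂ)))
      + 2 * (Real.pi : ℂ) * I * (∑ i, ((n i : ℂ) + (a i : ℂ)) * (z i + (b i : ℂ))))

lemma theta2_eq (a b : Fin 2 → ℝ) (z : Fin 2 → ℂ) (Ω : Matrix (Fin 2) (Fin 2) ℂ) :
    theta2 a b z Ω = ∑' n, thetaTerm a b z Ω n := rfl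

lemma summable_gauss {c : ℝ} (hc : 0 < c) (a y : ℝ) :
    Summable fun n : ℤ => Real.exp (-Real.pi * c * (n + a) ^ 2 - 2 * Real.pi * (n + a) * y) := by
  have h := ((summable_jacobiTheta₂_term_iff ((c * a + y : ℝ) * I) (c * I)).2 (by simpa using hc)).norm
  refine (h.mul_left (Real.exp (-Real.pi * c * a ^ 2 - 2 * Real.pi * a * y))).congr fun n => ?_
  rw [norm_jacobiTheta₂_term, ← Real.exp_add]
  congr 1
  simp
  ring

/-- The quadratic form `Im Ω` is bounded below by a positive multiple of the Euclidean one. -/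
lemma exists_posDef_lower {Ω : Matrix (Fin 2) (Fin 2) ℂ} (hΩ : IsSiegel Ω) :
    ∃ c : ℝ, 0 < c ∧ ∀ x y : ℝ, c * (x ^ 2 + y ^ 2) ≤
      x * (Ω 0 0).im * x + x * (Ω 0 1).im * y + (y * (Ω 1 0).im * x + y * (Ω 1 1).im * y) := by
  have hs : Ω 1 0 = Ω 0 1 := hΩ.1.apply 0 1
  have h0 := hΩ.2.diag_pos (i := 0)
  have hd := hΩ.2.det_pos
  rw [Matrix.det_fin_two] at hd
  simp only [Matrix.of_apply, hs] at h0 hd ⊢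
  set p := (Ω 0 0).im
  set q := (Ω 0 1).im
  set r := (Ω 1 1).im
  have hr : 0 < r := by nlinarith [sq_nonneg q]
  refine ⟨(p * r - q * q) / (p + r), by positivity, fun x y => ?_⟩
  -- `p * r - q ^ 2` over the trace bounds the smaller eigenvalue from below.
  rw [div_mul_eq_mul_div, div_le_iff₀ (by positivity)]
  nlinarith [sq_nonneg (p * x + q * y), sq_nonneg (q * x + r * y)]

/-- The terms are dominated by products of two one-variable Gaussians. -/
lemma summable_norm_thetaTerm (a b : Fin 2 → ℝ) (z : Fin 2 → ℂ)
    {Ω : Matrix (Fin 2) (Fin 2) ℂ} (hΩ : IsSiegel Ω) :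
    Summable fun n => ‖thetaTerm a b z Ω n‖ := by
  obtain ⟨c, hc, hQ⟩ := exists_posDef_lower hΩ
  have h := (summable_gauss hc (a 0) (z 0).im).mul_of_nonneg
    (summable_gauss hc (a 1) (z 1).im) (fun _ => (Real.exp_pos _).le)
    (fun _ => (Real.exp_pos _).le)
  refine Summable.of_nonneg_of_le (fun _ => norm_nonneg _) (fun n => ?_)
    ((finTwoArrowEquiv ℤ).summable_iff.2 h)
  simp only [thetaTerm, Complex.norm_exp, Function.comp, finTwoArrowEquiv_apply, ← Real.exp_add]
  refine Real.exp_le_exp.2 ?_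
  have := mul_le_mul_of_nonneg_left (hQ (n 0 + a 0) (n 1 + a 1)) Real.pi_pos.le
  simp [Fin.sum_univ_two]
  nlinarith [this]

/-- Product of four theta series as one series over quadruples of lattice vectors. -/
lemma four_theta_hasSum {Ω : Matrix (Fin 2) (Fin 2) ℂ} (hΩ : IsSiegel Ω)
    (a₁ b₁ a₂ b₂ a₃ b₃ a₄ b₄ : Fin 2 → ℝ) (z₁ z₂ z₃ z₄ : Fin 2 → ℂ) :
    HasSum (fun m : ((Fin 2 → ℤ) × (Fin 2 → ℤ)) × (Fin 2 → ℤ) × (Fin 2 → ℤ) =>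
      (thetaTerm a₁ b₁ z₁ Ω m.1.1 * thetaTerm a₂ b₂ z₂ Ω m.1.2) *
        (thetaTerm a₃ b₃ z₃ Ω m.2.1 * thetaTerm a₄ b₄ z₄ Ω m.2.2))
      ((theta2 a₁ b₁ z₁ Ω * theta2 a₂ b₂ z₂ Ω) * (theta2 a₃ b₃ z₃ Ω * theta2 a₄ b₄ z₄ Ω)) := by
  have s₁ := summable_norm_thetaTerm a₁ b₁ z₁ hΩ
  have s₂ := summable_norm_thetaTerm a₂ b₂ z₂ hΩ
  have s₃ := summable_norm_thetaTerm a₃ b₃ z₃ hΩ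
  have s₄ := summable_norm_thetaTerm a₄ b₄ z₄ hΩ
  have s₁₂ := s₁.mul_norm s₂
  have s₃₄ := s₃.mul_norm s₄
  simp only [theta2_eq]
  rw [tsum_mul_tsum_of_summable_norm s₁ s₂, tsum_mul_tsum_of_summable_norm s₃ s₄,
    tsum_mul_tsum_of_summable_norm s₁₂ s₃₄]
  exact (s₁₂.mul_norm s₃₄).of_norm.hasSum

/-! ### Half-integral characteristics -/

/-- Theta function with half-integral characteristics `A / 2`, `B / 2`. -/
noncomputable def th (Ω : Matrix (Fin 2) (Fin 2) ℂ) (A B : Fin 2 → ℤ) (z : Fin 2 → ℂ) : ℂ :=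
  theta2 (fun i => (A i : ℝ) / 2) (fun i => (B i : ℝ) / 2) z Ω

/-- Quasi-periodicity in the first characteristic: integer shifts do not change the series. -/
lemma th_add_left (Ω : Matrix (Fin 2) (Fin 2) ℂ) (A B k : Fin 2 → ℤ) (z : Fin 2 → ℂ) :
    th Ω (fun i => A i + 2 * k i) B z = th Ω A B z := by
  simp only [th, theta2_eq]
  rw [← (Equiv.addRight k).tsum_eq (thetaTerm (fun i => (A i : ℝ) / 2) _ z Ω)]
  refine tsum_congr fun n => ?_
  simp only [thetaTerm, Equiv.coe_addRight, Pi.add_apply]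
  congr 1
  push_cast
  simp only [add_div, mul_div_cancel_left₀ _ (two_ne_zero' ℂ)]
  simp only [add_assoc, add_comm, add_left_comm]

lemma exp_pi_mul_int (N : ℤ) : Complex.exp (Real.pi * I * N) = (-1) ^ N := by
  rw [mul_comm, Complex.exp_int_mul, Complex.exp_pi_mul_I]

/-- Quasi-periodicity in the second characteristic: integer shifts change the sign only. -/
lemma th_add_right (Ω : Matrix (Fin 2) (Fin 2) ℂ) (A B k : Fin 2 → ℤ) (z : Fin 2 → ℂ) :
    th Ω A (fun i => B i + 2 * k i) z = (-1) ^ (A 0 * k 0 + A 1 * k 1) * th Ω A B z := by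
  simp only [th, theta2_eq]
  rw [← tsum_mul_left]
  refine tsum_congr fun n => ?_
  have h : Complex.exp (Real.pi * I * (A 0 * k 0 + A 1 * k 1 : ℤ))
      = Complex.exp (Real.pi * I * (A 0 * k 0 + A 1 * k 1 + 2 * (n 0 * k 0 + n 1 * k 1) : ℤ)) := by
    rw [exp_pi_mul_int, exp_pi_mul_int, zpow_add₀ (by norm_num) _ (2 * _), zpow_mul]
    simp
  rw [← exp_pi_mul_int, h, thetaTerm, thetaTerm, ← Complex.exp_add]
  congr 1
  simp only [Fin.sum_univ_two]
  push_cast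
  ring

lemma th_neg (Ω : Matrix (Fin 2) (Fin 2) ℂ) (A B : Fin 2 → ℤ) :
    th Ω (fun i => -A i) (fun i => -B i) 0 = th Ω A B 0 := by
  simp only [th, theta2_eq]
  rw [← (Equiv.neg _).tsum_eq (thetaTerm (fun i => (A i : ℝ) / 2) _ 0 Ω)]
  refine tsum_congr fun n => ?_
  simp only [thetaTerm, Equiv.neg_apply]
  congr 1
  simp only [Fin.sum_univ_two, Pi.zero_apply, Pi.neg_apply]
  push_cast
  ring

/-- Theta constants with odd characteristic vanish. -/
lemma th_odd (Ω : Matrix (Fin 2) (Fin 2) ℂ) (A B : Fin 2 → ℤ) (h : Odd (A 0 * B 0 + A 1 * B 1)) :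
    th Ω A B 0 = 0 := by
  have h1 := th_add_left Ω (fun i => -A i) (fun i => -B i) A 0
  have h2 := th_add_right Ω A (fun i => -B i) B 0
  rw [h.neg_one_zpow] at h2
  have e : ∀ C : Fin 2 → ℤ, (fun i => -C i + 2 * C i) = C := fun C => by ext i; ring
  rw [e] at h1 h2
  rw [th_neg] at h1
  linear_combination (h2 - h1) / 2

lemma sum_bits (f : (Fin 2 → Fin 2) → ℂ) :
    ∑ β, f β = f ![0, 0] + f ![0, 1] + (f ![1, 0] + f ![1, 1]) := by
  rw [← (finTwoArrowEquiv (Fin 2)).symm.sum_comp, Fintype.sum_prod_type]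
  simp [Fin.sum_univ_two]

/-- Orthogonality of characters on `(ℤ/2)²`. -/
lemma sum_char (N : Fin 2 → ℤ) :
    ∑ β : Fin 2 → Fin 2, (-1 : ℂ) ^ ((β 0 : ℤ) * N 0 + (β 1 : ℤ) * N 1)
      = if Even (N 0) ∧ Even (N 1) then 4 else 0 := by
  rw [sum_bits]
  rcases Int.even_or_odd (N 0) with h0 | h0 <;> rcases Int.even_or_odd (N 1) with h1 | h1 <;>
    simp [zpow_add₀, h0.neg_one_zpow, h1.neg_one_zpow, h0, h1, Int.not_even_iff_odd.2]
  norm_num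

/-! ### The Riemann quartic relation -/

/-- Quadruples of vectors of the lattice `ℤ²`. -/
abbrev Quad := ((Fin 2 → ℤ) × (Fin 2 → ℤ)) × (Fin 2 → ℤ) × (Fin 2 → ℤ)

/-- The orthogonal map `½ (1 1 1 1; 1 1 -1 -1; 1 -1 1 -1; 1 -1 -1 1)`, applied to each coordinate
of a quadruple. Its image consists of quadruples that are all integral or all half-integral in each
coordinate; the first component records which, the second one holds the integral parts. -/
def split (m : Quad) : (Fin 2 → Fin 2) × Quad :=
  (fun i => ⟨((m.1.1 i + m.1.2 i + m.2.1 i + m.2.2 i) % 2).toNat, by lia⟩,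
    ((fun i => (m.1.1 i + m.1.2 i + m.2.1 i + m.2.2 i) / 2,
      fun i => (m.1.1 i + m.1.2 i - m.2.1 i - m.2.2 i) / 2),
     (fun i => (m.1.1 i - m.1.2 i + m.2.1 i - m.2.2 i) / 2,
      fun i => (m.1.1 i - m.1.2 i - m.2.1 i + m.2.2 i) / 2)))

lemma split_injective : Function.Injective split := by
  intro m m' h
  simp only [split, Prod.mk.injEq, funext_iff, Fin.mk.injEq] at h
  obtain ⟨h0, ⟨h1, h2⟩, h3, h4⟩ := h
  ext i <;> (have := h0 i; have := h1 i; have := h2 i; have := h3 i; have := h4 i; lia)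

/-- The image of `split` is cut out by a parity condition. -/
lemma mem_range_split (α : Fin 2 → Fin 2) (n : Quad)
    (h : ∀ i, Even (n.1.1 i + n.1.2 i + n.2.1 i + n.2.2 i)) : (α, n) ∈ Set.range split := by
  refine ⟨((fun i => (n.1.1 i + n.1.2 i + n.2.1 i + n.2.2 i) / 2 + (α i : ℕ),
    fun i => (n.1.1 i + n.1.2 i - n.2.1 i - n.2.2 i) / 2),
    (fun i => (n.1.1 i - n.1.2 i + n.2.1 i - n.2.2 i) / 2,
    fun i => (n.1.1 i - n.1.2 i - n.2.1 i + n.2.2 i) / 2)), ?_⟩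
  simp only [split, funext_iff, Fin.ext_iff, Prod.ext_iff]
  refine ⟨fun i => ?_, ⟨fun i => ?_, fun i => ?_⟩, fun i => ?_, fun i => ?_⟩ <;>
  · obtain ⟨k, hk⟩ := h i
    have := (α i).isLt
    lia

/-- Relation between a quadruple and its image under `split`, coordinate by coordinate. -/
lemma split_spec (m : Quad) (i : Fin 2) :
    (2 * (split m).2.1.1 i + ((split m).1 i : ℕ) = m.1.1 i + m.1.2 i + m.2.1 i + m.2.2 i) ∧
    (2 * (split m).2.1.2 i + ((split m).1 i : ℕ) = m.1.1 i + m.1.2 i - m.2.1 i - m.2.2 i) ∧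
    (2 * (split m).2.2.1 i + ((split m).1 i : ℕ) = m.1.1 i - m.1.2 i + m.2.1 i - m.2.2 i) ∧
    (2 * (split m).2.2.2 i + ((split m).1 i : ℕ) = m.1.1 i - m.1.2 i - m.2.1 i + m.2.2 i) := by
  simp only [split]
  lia

/-- The vector `A + α`, for `α` with entries `0` or `1`. -/
def sh (A : Fin 2 → ℤ) (α : Fin 2 → Fin 2) (i : Fin 2) : ℤ := A i + (α i : ℕ)

/-- Term of the product of four theta series with characteristics `(Aₖ + α) / 2`, `(Bₖ + β) / 2`
at the arguments `2z, 0, 0, 0`. -/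
noncomputable def quadTerm (Ω : Matrix (Fin 2) (Fin 2) ℂ) (A₁ A₂ A₃ A₄ B₁ B₂ B₃ B₄ : Fin 2 → ℤ)
    (z : Fin 2 → ℂ) (α β : Fin 2 → Fin 2) (n : Quad) : ℂ :=
  (thetaTerm (fun i => (sh A₁ α i : ℝ) / 2) (fun i => (sh B₁ β i : ℝ) / 2)
      (fun i => 2 * z i) Ω n.1.1 *
    thetaTerm (fun i => (sh A₂ α i : ℝ) / 2) (fun i => (sh B₂ β i : ℝ) / 2) 0 Ω n.1.2) *
  (thetaTerm (fun i => (sh A₃ α i : ℝ) / 2) (fun i => (sh B₃ β i : ℝ) / 2) 0 Ω n.2.1 *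
    thetaTerm (fun i => (sh A₄ α i : ℝ) / 2) (fun i => (sh B₄ β i : ℝ) / 2) 0 Ω n.2.2)

/-- Adding `β / 2` to the second characteristics multiplies the term by the sign character `β`. -/
lemma quadTerm_char (Ω : Matrix (Fin 2) (Fin 2) ℂ) (A₁ A₂ A₃ A₄ B₁ B₂ B₃ B₄ : Fin 2 → ℤ)
    (hA : ∀ i, A₁ i + A₂ i + A₃ i + A₄ i = 0) (z : Fin 2 → ℂ) (α β : Fin 2 → Fin 2) (n : Quad) :
    quadTerm Ω A₁ A₂ A₃ A₄ B₁ B₂ B₃ B₄ z α β n =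
      quadTerm Ω A₁ A₂ A₃ A₄ B₁ B₂ B₃ B₄ z α 0 n *
        (-1) ^ (((β 0 : ℕ) : ℤ) * (n.1.1 0 + n.1.2 0 + n.2.1 0 + n.2.2 0) +
          ((β 1 : ℕ) : ℤ) * (n.1.1 1 + n.1.2 1 + n.2.1 1 + n.2.2 1)) := by
  have h : ∀ M k : ℤ, (-1 : ℂ) ^ M = Complex.exp (Real.pi * I * (M + 2 * k : ℤ)) := by
    intro M k
    rw [exp_pi_mul_int, zpow_add₀ (by norm_num), zpow_mul]
    simp
  have e : ∀ i, (A₄ i : ℂ) = -A₁ i - A₂ i - A₃ i := fun i => by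
    rw [← sub_eq_zero]; have := hA i; norm_cast; lia
  -- the even integer `2 (α ⬝ β)` accounts for the shift of the characteristics by `α / 2`
  rw [h _ ((α 0 : ℕ) * (β 0 : ℕ) + (α 1 : ℕ) * (β 1 : ℕ))]
  simp only [quadTerm, thetaTerm, ← Complex.exp_add]
  congr 1
  simp only [Fin.sum_univ_two, sh]
  push_cast
  simp only [e, Pi.zero_apply]
  simp
  ring

/-- Orthogonality of the map behind `split`: both sides have the same exponent. -/
lemma quadTerm_split (Ω : Matrix (Fin 2) (Fin 2) ℂ) (A₁ A₂ A₃ A₄ B₁ B₂ B₃ B₄ : Fin 2 → ℤ)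
    (hA : ∀ i, A₁ i + A₂ i + A₃ i + A₄ i = 0) (hB : ∀ i, B₁ i + B₂ i + B₃ i + B₄ i = 0)
    (z : Fin 2 → ℂ) (m : Quad) :
    quadTerm Ω A₁ A₂ A₃ A₄ B₁ B₂ B₃ B₄ z (split m).1 0 (split m).2 =
    (thetaTerm ![0, 0] ![0, 0] z Ω m.1.1 *
      thetaTerm (fun i => (A₁ i + A₂ i - A₃ i - A₄ i : ℝ) / 4)
        (fun i => (B₁ i + B₂ i - B₃ i - B₄ i : ℝ) / 4) z Ω m.1.2) *
    (thetaTerm (fun i => (A₁ i - A₂ i + A₃ i - A₄ i : ℝ) / 4)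
        (fun i => (B₁ i - B₂ i + B₃ i - B₄ i : ℝ) / 4) z Ω m.2.1 *
      thetaTerm (fun i => (A₁ i - A₂ i - A₃ i + A₄ i : ℝ) / 4)
        (fun i => (B₁ i - B₂ i - B₃ i + B₄ i : ℝ) / 4) z Ω m.2.2) := by
  have e : ∀ i, (A₄ i : ℂ) = -A₁ i - A₂ i - A₃ i := fun i => by
    rw [← sub_eq_zero]; have := hA i; norm_cast; lia
  have e' : ∀ i, (B₄ i : ℂ) = -B₁ i - B₂ i - B₃ i := fun i => by
    rw [← sub_eq_zero]; have := hB i; norm_cast; lia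
  have s := split_spec m
  generalize split m = p at s ⊢
  obtain ⟨α, ⟨n₁, n₂⟩, n₃, n₄⟩ := p
  obtain ⟨⟨m₁, m₂⟩, m₃, m₄⟩ := m
  simp only at s ⊢
  have c₁ : ∀ i, (n₁ i : ℂ) = (m₁ i + m₂ i + m₃ i + m₄ i - (α i : ℕ)) / 2 := fun i => by
    rw [eq_div_iff two_ne_zero]; have := s i; norm_cast; lia
  have c₂ : ∀ i, (n₂ i : ℂ) = (m₁ i + m₂ i - m₃ i - m₄ i - (α i : ℕ)) / 2 := fun i => by
    rw [eq_div_iff two_ne_zero]; have := s i; norm_cast; lia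
  have c₃ : ∀ i, (n₃ i : ℂ) = (m₁ i - m₂ i + m₃ i - m₄ i - (α i : ℕ)) / 2 := fun i => by
    rw [eq_div_iff two_ne_zero]; have := s i; norm_cast; lia
  have c₄ : ∀ i, (n₄ i : ℂ) = (m₁ i - m₂ i - m₃ i + m₄ i - (α i : ℕ)) / 2 := fun i => by
    rw [eq_div_iff two_ne_zero]; have := s i; norm_cast; lia
  simp only [quadTerm, thetaTerm, ← Complex.exp_add]
  congr 1
  simp only [Fin.sum_univ_two, sh, c₁, c₂, c₃, c₄]
  push_cast
  simp only [e, e', Pi.zero_apply]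
  simp
  ring

/-- The Riemann quartic relation at the arguments `(z, z, z, z)`, whose image under the orthogonal
map is `(2z, 0, 0, 0)`. The hypotheses on the sums of characteristics make the first factor on the
left the theta function of characteristic zero. -/
theorem riemann_relation {Ω : Matrix (Fin 2) (Fin 2) ℂ} (hΩ : IsSiegel Ω)
    (A₁ A₂ A₃ A₄ B₁ B₂ B₃ B₄ : Fin 2 → ℤ)
    (hA : ∀ i, A₁ i + A₂ i + A₃ i + A₄ i = 0) (hB : ∀ i, B₁ i + B₂ i + B₃ i + B₄ i = 0)
    (z : Fin 2 → ℂ) :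
    4 * ((theta2 ![0, 0] ![0, 0] z Ω *
      theta2 (fun i => (A₁ i + A₂ i - A₃ i - A₄ i : ℝ) / 4)
        (fun i => (B₁ i + B₂ i - B₃ i - B₄ i : ℝ) / 4) z Ω) *
    (theta2 (fun i => (A₁ i - A₂ i + A₃ i - A₄ i : ℝ) / 4)
        (fun i => (B₁ i - B₂ i + B₃ i - B₄ i : ℝ) / 4) z Ω *
      theta2 (fun i => (A₁ i - A₂ i - A₃ i + A₄ i : ℝ) / 4)
        (fun i => (B₁ i - B₂ i - B₃ i + B₄ i : ℝ) / 4) z Ω)) =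
    ∑ α : Fin 2 → Fin 2, ∑ β : Fin 2 → Fin 2,
      (th Ω (sh A₁ α) (sh B₁ β) (fun i => 2 * z i) * th Ω (sh A₂ α) (sh B₂ β) 0) *
        (th Ω (sh A₃ α) (sh B₃ β) 0 * th Ω (sh A₄ α) (sh B₄ β) 0) := by
  have hl := (four_theta_hasSum hΩ ![0, 0] ![0, 0]
    (fun i => (A₁ i + A₂ i - A₃ i - A₄ i : ℝ) / 4) (fun i => (B₁ i + B₂ i - B₃ i - B₄ i : ℝ) / 4)
    (fun i => (A₁ i - A₂ i + A₃ i - A₄ i : ℝ) / 4) (fun i => (B₁ i - B₂ i + B₃ i - B₄ i : ℝ) / 4)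
    (fun i => (A₁ i - A₂ i - A₃ i + A₄ i : ℝ) / 4) (fun i => (B₁ i - B₂ i - B₃ i + B₄ i : ℝ) / 4)
    z z z z).mul_left 4
  refine hl.unique ?_
  set g : (Fin 2 → Fin 2) × Quad → ℂ := fun p =>
    ∑ β, quadTerm Ω A₁ A₂ A₃ A₄ B₁ B₂ B₃ B₄ z p.1 β p.2 with hg
  -- the sum over `β` keeps exactly the quadruples satisfying the parity condition
  have hg' : ∀ p, g p = quadTerm Ω A₁ A₂ A₃ A₄ B₁ B₂ B₃ B₄ z p.1 0 p.2 *
      if Even (p.2.1.1 0 + p.2.1.2 0 + p.2.2.1 0 + p.2.2.2 0) ∧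
        Even (p.2.1.1 1 + p.2.1.2 1 + p.2.2.1 1 + p.2.2.2 1) then 4 else 0 := by
    intro p
    rw [hg]
    dsimp only
    rw [Finset.sum_congr rfl fun β _ => quadTerm_char Ω A₁ A₂ A₃ A₄ B₁ B₂ B₃ B₄ hA z p.1 β p.2,
      ← Finset.mul_sum, ← sum_char fun i => p.2.1.1 i + p.2.1.2 i + p.2.2.1 i + p.2.2.2 i]
  have hsum : HasSum g (∑ α : Fin 2 → Fin 2, ∑ β : Fin 2 → Fin 2,
      (th Ω (sh A₁ α) (sh B₁ β) (fun i => 2 * z i) * th Ω (sh A₂ α) (sh B₂ β) 0) *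
        (th Ω (sh A₃ α) (sh B₃ β) 0 * th Ω (sh A₄ α) (sh B₄ β) 0)) := by
    have h1 : ∀ α : Fin 2 → Fin 2, HasSum (fun p : (Fin 2 → Fin 2) × Quad =>
        if p.1 = α then g p else 0) (∑ β : Fin 2 → Fin 2,
        (th Ω (sh A₁ α) (sh B₁ β) (fun i => 2 * z i) * th Ω (sh A₂ α) (sh B₂ β) 0) *
          (th Ω (sh A₃ α) (sh B₃ β) 0 * th Ω (sh A₄ α) (sh B₄ β) 0)) := by
      intro α
      rw [← (Prod.mk_right_injective α).hasSum_iff]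
      · refine (hasSum_sum fun β _ => four_theta_hasSum hΩ _ _ _ _ _ _ _ _ _ _ _ _).congr_fun ?_
        intro n
        simp only [Function.comp, if_true, hg, quadTerm]
      · rintro ⟨α', n⟩ h
        rw [if_neg]
        rintro rfl
        exact h ⟨n, rfl⟩
    have h2 := hasSum_sum (s := Finset.univ) fun α _ => h1 α
    simpa only [Finset.sum_ite_eq, Finset.mem_univ, if_true] using h2
  rw [← split_injective.hasSum_iff] at hsum
  · refine hsum.congr_fun ?_
    intro m
    have he : ∀ i, Even ((split m).2.1.1 i + (split m).2.1.2 i + (split m).2.2.1 i +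
        (split m).2.2.2 i) := fun i =>
      ⟨m.1.1 i - ((split m).1 i : ℕ), by have := split_spec m i; lia⟩
    rw [Function.comp, hg', if_pos ⟨he 0, he 1⟩,
      quadTerm_split Ω A₁ A₂ A₃ A₄ B₁ B₂ B₃ B₄ hA hB, mul_comm]
  · rintro ⟨α, n⟩ h
    rw [hg', if_neg, mul_zero]
    rintro ⟨h0, h1⟩
    exact h (mem_range_split α n fun i => by fin_cases i <;> assumption)
/-! ### Reduction of characteristics to `0` and `1` -/

section Reduction

variable (Ω : Matrix (Fin 2) (Fin 2) ℂ) (i j k l : ℤ) (z : Fin 2 → ℂ)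

lemma th_left_period (i' j' : ℤ) :
    th Ω ![i + 2 * i', j + 2 * j'] ![k, l] z = th Ω ![i, j] ![k, l] z := by
  rw [← th_add_left Ω ![i, j] ![k, l] ![i', j'] z]
  congr 1
  ext t
  fin_cases t <;> rfl

lemma th_right_period (k' l' : ℤ) :
    th Ω ![i, j] ![k + 2 * k', l + 2 * l'] z =
      (-1) ^ (i * k' + j * l') * th Ω ![i, j] ![k, l] z := by
  have h := th_add_right Ω ![i, j] ![k, l] ![k', l'] z
  simp only [Matrix.cons_val_zero, Matrix.cons_val_one] at h
  rw [← h]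
  congr 1
  ext t
  fin_cases t <;> rfl

lemma th_i_two : th Ω ![2, j] ![k, l] z = th Ω ![0, j] ![k, l] z := by
  simpa using th_left_period Ω 0 j k l z 1 0

lemma th_i_neg : th Ω ![-1, j] ![k, l] z = th Ω ![1, j] ![k, l] z := by
  simpa using th_left_period Ω 1 j k l z (-1) 0

lemma th_j_two : th Ω ![i, 2] ![k, l] z = th Ω ![i, 0] ![k, l] z := by
  simpa using th_left_period Ω i 0 k l z 0 1

lemma th_j_neg : th Ω ![i, -1] ![k, l] z = th Ω ![i, 1] ![k, l] z := by
  simpa using th_left_period Ω i 1 k l z 0 (-1)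

lemma th_k_two : th Ω ![i, j] ![2, l] z = (-1) ^ i * th Ω ![i, j] ![0, l] z := by
  simpa using th_right_period Ω i j 0 l z 1 0

lemma th_k_neg : th Ω ![i, j] ![-1, l] z = (-1) ^ i * th Ω ![i, j] ![1, l] z := by
  simpa [← inv_zpow] using th_right_period Ω i j 1 l z (-1) 0

lemma th_l_two : th Ω ![i, j] ![k, 2] z = (-1) ^ j * th Ω ![i, j] ![k, 0] z := by
  simpa using th_right_period Ω i j k 0 z 0 1

lemma th_l_neg : th Ω ![i, j] ![k, -1] z = (-1) ^ j * th Ω ![i, j] ![k, 1] z := by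
  simpa [← inv_zpow] using th_right_period Ω i j k 1 z 0 (-1)

lemma sh_cons (a b : Fin 2) : sh ![i, j] ![a, b] = ![i + (a : ℕ), j + (b : ℕ)] := by
  ext t
  fin_cases t <;> rfl

lemma theta2_eq_th (a b c d : ℝ) (ha : a = i / 2) (hb : b = j / 2) (hc : c = k / 2)
    (hd : d = l / 2) : theta2 ![a, b] ![c, d] z Ω = th Ω ![i, j] ![k, l] z := by
  rw [th, ha, hb, hc, hd]
  congr 1 <;> (ext t; fin_cases t <;> rfl)

end Reduction

/-! ### The four hyperplanes -/

/-- The right-hand side of the Riemann relation vanishes on the theta divisor. -/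
lemma riemann_vanish {Ω : Matrix (Fin 2) (Fin 2) ℂ} (hΩ : IsSiegel Ω) {z : Fin 2 → ℂ}
    (hz : theta2 ![0, 0] ![0, 0] z Ω = 0) (A₁ A₂ A₃ A₄ B₁ B₂ B₃ B₄ : Fin 2 → ℤ)
    (hA : ∀ i, A₁ i + A₂ i + A₃ i + A₄ i = 0) (hB : ∀ i, B₁ i + B₂ i + B₃ i + B₄ i = 0) :
    ∑ α : Fin 2 → Fin 2, ∑ β : Fin 2 → Fin 2,
      (th Ω (sh A₁ α) (sh B₁ β) (fun i => 2 * z i) * th Ω (sh A₂ α) (sh B₂ β) 0) *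
        (th Ω (sh A₃ α) (sh B₃ β) 0 * th Ω (sh A₄ α) (sh B₄ β) 0) = 0 := by
  rw [← riemann_relation hΩ A₁ A₂ A₃ A₄ B₁ B₂ B₃ B₄ hA hB z, hz]
  ring

theorem rosenhain_hyperplanes_through_trope_D1
    (Ω : Matrix (Fin 2) (Fin 2) ℂ) (hΩ : IsSiegel Ω) (z : Fin 2 → ℂ)
    (hz : theta2 ![0, 0] ![0, 0] z Ω = 0) :
    A₁ Ω * A₃ Ω * A₆ Ω * X₄ z Ω + A₂ Ω * A₄ Ω * A₉ Ω * X₅ z Ω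
      + A₅ Ω * A₇ Ω * A₈ Ω * X₆ z Ω = 0 ∧
    A₁ Ω * A₁₀ Ω * A₃ Ω * X₃ z Ω + A₅ Ω * A₈ Ω * A₉ Ω * X₅ z Ω
      - A₂ Ω * A₄ Ω * A₇ Ω * X₆ z Ω = 0 ∧
    A₁ Ω * A₆ Ω * A₁₀ Ω * X₂ z Ω + A₄ Ω * A₅ Ω * A₇ Ω * X₅ z Ω
      - A₂ Ω * A₈ Ω * A₉ Ω * X₆ z Ω = 0 ∧
    A₅ Ω * A₆ Ω * A₉ Ω * X₁ z Ω + A₁ Ω * A₂ Ω * A₇ Ω * X₃ z Ω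
      - A₃ Ω * A₄ Ω * A₁₀ Ω * X₆ z Ω = 0 := by
  have a1 : A₁ Ω = th Ω ![0, 0] ![0, 0] 0 :=
    theta2_eq_th _ _ _ _ _ _ _ _ _ _ (by simp) (by simp) (by simp) (by simp)
  have a2 : A₂ Ω = th Ω ![0, 0] ![0, 1] 0 :=
    theta2_eq_th _ _ _ _ _ _ _ _ _ _ (by simp) (by simp) (by simp) (by simp)
  have a3 : A₃ Ω = th Ω ![0, 0] ![1, 0] 0 :=
    theta2_eq_th _ _ _ _ _ _ _ _ _ _ (by simp) (by simp) (by simp) (by simp)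
  have a4 : A₄ Ω = th Ω ![0, 0] ![1, 1] 0 :=
    theta2_eq_th _ _ _ _ _ _ _ _ _ _ (by simp) (by simp) (by simp) (by simp)
  have a5 : A₅ Ω = th Ω ![0, 1] ![0, 0] 0 :=
    theta2_eq_th _ _ _ _ _ _ _ _ _ _ (by simp) (by simp) (by simp) (by simp)
  have a6 : A₆ Ω = th Ω ![1, 0] ![0, 0] 0 :=
    theta2_eq_th _ _ _ _ _ _ _ _ _ _ (by simp) (by simp) (by simp) (by simp)
  have a7 : A₇ Ω = th Ω ![1, 1] ![0, 0] 0 :=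
    theta2_eq_th _ _ _ _ _ _ _ _ _ _ (by simp) (by simp) (by simp) (by simp)
  have a8 : A₈ Ω = th Ω ![0, 1] ![1, 0] 0 :=
    theta2_eq_th _ _ _ _ _ _ _ _ _ _ (by simp) (by simp) (by simp) (by simp)
  have a9 : A₉ Ω = th Ω ![1, 0] ![0, 1] 0 :=
    theta2_eq_th _ _ _ _ _ _ _ _ _ _ (by simp) (by simp) (by simp) (by simp)
  have a10 : A₁₀ Ω = th Ω ![1, 1] ![1, 1] 0 :=
    theta2_eq_th _ _ _ _ _ _ _ _ _ _ (by simp) (by simp) (by simp) (by simp)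
  have x1 : X₁ z Ω = th Ω ![0, 1] ![0, 1] fun i => 2 * z i :=
    theta2_eq_th _ _ _ _ _ _ _ _ _ _ (by simp) (by simp) (by simp) (by simp)
  have x2 : X₂ z Ω = th Ω ![0, 1] ![1, 1] fun i => 2 * z i :=
    theta2_eq_th _ _ _ _ _ _ _ _ _ _ (by simp) (by simp) (by simp) (by simp)
  have x3 : X₃ z Ω = th Ω ![1, 1] ![0, 1] fun i => 2 * z i :=
    theta2_eq_th _ _ _ _ _ _ _ _ _ _ (by simp) (by simp) (by simp) (by simp)
  have x4 : X₄ z Ω = th Ω ![1, 0] ![1, 0] fun i => 2 * z i :=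
    theta2_eq_th _ _ _ _ _ _ _ _ _ _ (by simp) (by simp) (by simp) (by simp)
  have x5 : X₅ z Ω = th Ω ![1, 0] ![1, 1] fun i => 2 * z i :=
    theta2_eq_th _ _ _ _ _ _ _ _ _ _ (by simp) (by simp) (by simp) (by simp)
  have x6 : X₆ z Ω = th Ω ![1, 1] ![1, 0] fun i => 2 * z i :=
    theta2_eq_th _ _ _ _ _ _ _ _ _ _ (by simp) (by simp) (by simp) (by simp)
  have o1 : th Ω ![0, 1] ![0, 1] 0 = 0 := th_odd _ _ _ (by decide)
  have o2 : th Ω ![0, 1] ![1, 1] 0 = 0 := th_odd _ _ _ (by decide)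
  have o3 : th Ω ![1, 1] ![0, 1] 0 = 0 := th_odd _ _ _ (by decide)
  have o4 : th Ω ![1, 0] ![1, 0] 0 = 0 := th_odd _ _ _ (by decide)
  have o5 : th Ω ![1, 0] ![1, 1] 0 = 0 := th_odd _ _ _ (by decide)
  have o6 : th Ω ![1, 1] ![1, 0] 0 = 0 := th_odd _ _ _ (by decide)
  -- The four characteristics in each relation are those of one `X` and of the three theta constants
  -- multiplying it, with signs chosen so that they add up to zero.
  have h1 := riemann_vanish hΩ hz ![1, 0] ![0, 0] ![0, 0] ![-1, 0] ![1, 0] ![0, 0] ![-1, 0] ![0, 0]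
    (by decide) (by decide)
  have h2 := riemann_vanish hΩ hz ![1, 1] ![0, 0] ![-1, -1] ![0, 0]
    ![0, 1] ![0, 0] ![1, -1] ![-1, 0] (by decide) (by decide)
  have h5 := riemann_vanish hΩ hz ![0, 1] ![0, 0] ![1, 0] ![-1, -1] ![1, 1] ![0, 0] ![0, 0] ![-1, -1]
    (by decide) (by decide)
  have h14 := riemann_vanish hΩ hz ![0, 1] ![0, -1] ![1, 0] ![-1, 0] ![0, 1] ![0, 0] ![0, 0] ![0, -1]
    (by decide) (by decide)
  -- Of the sixteen terms in each relation only three contain no odd theta constant.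
  simp only [sum_bits, sh_cons, Fin.val_zero, Fin.val_one, Nat.cast_zero, Nat.cast_one, add_zero,
    zero_add, neg_add_cancel, one_add_one_eq_two, th_i_two, th_i_neg, th_j_two, th_j_neg,
    th_k_two, th_k_neg, th_l_two, th_l_neg, zpow_zero, zpow_one, zpow_neg_one, one_mul,
    mul_zero, zero_mul, o1, o2, o3, o4, o5, o6] at h1 h2 h5 h14
  simp only [a1, a2, a3, a4, a5, a6, a7, a8, a9, a10, x1, x2, x3, x4, x5, x6]
  refine ⟨?_, ?_, ?_, ?_⟩
  · linear_combination h1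
  · linear_combination -h2
  · linear_combination h5
  · linear_combination h14
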